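/- Let B be an inner function. Then (1−|z|)^{−1}|B′(z)| belongs to weak L^1 of the unit disc with respect to area measure (i.e. there is C > 0 with Area{z : |B′(z)| > λ(1−|z|)} ≤ C/λ for all λ > 0) if and only if B is a finite Blaschke product. -/

import Mathlib

open MeasureTheory Real Set Filter

noncomputable section

/-- Inner function: bounded holomorphic on the unit disc with unimodular radial limits a.e. -/
def IsInner (B : ℂ → ℂ) : Prop :=
  DifferentiableOn ℂ B (Metric.ball 0 1) ∧ (∀ z ∈ Metric.ball (0:ℂ) 1, ‖B z‖ ≤ 1) ∧
  ∀ᵐ (θ : ℝ) ∂(volume.restrict (Set.Ico (0:ℝ) (2*π))),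
    Filter.Tendsto (fun r : ℝ => ‖B ((r:ℂ) * Complex.exp ((θ:ℂ) * Complex.I))‖)
      (nhdsWithin 1 (Set.Iio 1)) (nhds 1)

/-- `B` is a finite Blaschke product. -/
def IsFiniteBlaschkeProduct (B : ℂ → ℂ) : Prop :=
  ∃ (ξ : ℂ) (n : ℕ) (a : Fin n → ℂ), ‖ξ‖ = 1 ∧ (∀ i, ‖a i‖ < 1) ∧
    ∀ z ∈ Metric.ball (0:ℂ) 1,
      B z = ξ * ∏ i, (a i - z) / (1 - (starRingEnd ℂ) (a i) * z)

/-!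
If `B` is a finite Blaschke product then `B'` is bounded by some `M`, and `|B'(z)| > t (1 - |z|)`
confines `z` to an annulus of width `M / t` at the circle.

Conversely, let `B = ∑ bₙ zⁿ` be inner and `|B'| / (1 - |z|)` in weak `L¹`. As
`|B'| ≤ 2 / (1 - |z|)`, integrating the distribution function gives
`∫_{|z| < ρ} |B'| / (1 - |z|) ≤ 2 C log (1 / (1 - ρ)) + O(1)`. By Parseval and `|B| ≤ 1`, the mean
of `|B'|` over `|z| = r` is at least `∑ n |bₙ|² r²ⁿ`, so that the same integral grows at least like
`2 π (∑ n |bₙ|²) log (1 / (1 - ρ))`. Hence `∑ n |bₙ|² < ∞`.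

Write `Qᵢ` for the `i`-th backward shift of `B`. Since `(B(z) - B(a)) / (z - a) = ∑ Qᵢ₊₁(a) zⁱ`,
Parseval and the Poisson formula turn `|B| = 1` on the circle into
`1 - |B(a)|² = ∑ (1 - |a|²) |Qᵢ₊₁(a)|²`. Each term tends to `0` as `|a| → 1`, and is at most
`∑ₖ |bᵢ₊₁₊ₖ|²` by Cauchy-Schwarz; these bounds add up to `∑ n |bₙ|²`, so `|B(a)| → 1` by dominated
convergence. Such a `B` has finitely many zeros, and the maximum principle shows that nothing but a
unimodular constant is left after dividing out the corresponding Blaschke factors.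
-/

open Metric Finset
open scoped Topology ComplexConjugate

/-! ### Circle averages of power series -/

section CircleAverage

lemma hasSum_circleAverage {E ι : Type*} [NormedAddCommGroup E] [NormedSpace ℝ E] [Countable ι]
    {F : ι → ℂ → E} {f : ℂ → E} {c : ℂ} {R : ℝ} {u : ι → ℝ} (hu : Summable u)
    (hF : ∀ i, ContinuousOn (F i) (sphere c |R|)) (hFu : ∀ i, ∀ z ∈ sphere c |R|, ‖F i z‖ ≤ u i)
    (hf : ∀ z ∈ sphere c |R|, HasSum (F · z) (f z)) :
    HasSum (fun i => circleAverage (F i) c R) (circleAverage f c R) := by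
  have hmem := circleMap_mem_sphere' c R
  refine (intervalIntegral.hasSum_integral_of_dominated_convergence (fun i _ => u i)
    (fun i => ?_) (fun i => .of_forall fun θ _ => hFu i _ (hmem θ)) (.of_forall fun _ _ => hu)
    intervalIntegrable_const (.of_forall fun θ _ => hf _ (hmem θ))).const_smul (2 * π)⁻¹
  exact ((hF i).comp_continuous (continuous_circleMap c R) hmem).aestronglyMeasurable

lemma norm_circleAverage_le_circleAverage_norm {E : Type*} [NormedAddCommGroup E]
    [NormedSpace ℝ E] (f : ℂ → E) (c : ℂ) (R : ℝ) :
    ‖circleAverage f c R‖ ≤ circleAverage (fun z => ‖f z‖) c R := by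
  rw [circleAverage_def, circleAverage_def, norm_smul, norm_of_nonneg (by positivity), smul_eq_mul]
  gcongr
  exact intervalIntegral.norm_integral_le_integral_norm two_pi_pos.le

variable {a b : ℕ → ℂ} {R : ℝ}

lemma summable_norm_mul_abs_pow (h : Summable fun n => a n * (R : ℂ) ^ n) :
    Summable fun n => ‖a n‖ * |R| ^ n :=
  h.norm.congr fun n => by rw [norm_mul, norm_pow, Complex.norm_real, norm_eq_abs]

lemma circleAverage_pow_mul_conj_pow (m n : ℕ) (R : ℝ) :
    circleAverage (fun z => z ^ m * conj (z ^ n)) 0 R = if m = n then (R : ℂ) ^ (2 * n) else 0 := by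
  have hcircle : ∀ θ : ℝ, circleMap 0 R θ ^ m * conj (circleMap 0 R θ ^ n) =
      (R : ℂ) ^ (m + n) * Complex.exp ((m - n) * Complex.I * θ) := fun θ => by
    have hexp : conj (Complex.exp (θ * Complex.I)) = Complex.exp (-(θ * Complex.I)) := by
      rw [← Complex.exp_conj, map_mul, Complex.conj_ofReal, Complex.conj_I, mul_neg]
    rw [circleMap_zero, map_pow, map_mul, hexp, Complex.conj_ofReal, mul_pow, mul_pow,
      mul_mul_mul_comm, ← pow_add, ← Complex.exp_nat_mul, ← Complex.exp_nat_mul, ← Complex.exp_add]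
    ring_nf
  rw [circleAverage_def]
  simp only [hcircle, intervalIntegral.integral_const_mul]
  split_ifs with hmn
  · subst hmn
    have hpi : (π : ℂ) ≠ 0 := Complex.ofReal_ne_zero.2 pi_ne_zero
    simp [two_mul m, field]
  · have hne : ((m : ℂ) - n) * Complex.I ≠ 0 :=
      mul_ne_zero (sub_ne_zero.2 (Nat.cast_injective.ne hmn)) Complex.I_ne_zero
    have hperiod : Complex.exp (((m : ℂ) - n) * Complex.I * (2 * π : ℝ)) = 1 :=
      Complex.exp_eq_one_iff.2 ⟨m - n, by push_cast; ring⟩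
    rw [integral_exp_mul_complex hne, hperiod]
    simp

lemma hasSum_circleAverage_mul_conj {f g : ℂ → ℂ} (ha : Summable fun n => ‖a n‖ * |R| ^ n)
    (hb : Summable fun n => ‖b n‖ * |R| ^ n)
    (hf : ∀ z ∈ sphere (0 : ℂ) |R|, HasSum (fun n => a n * z ^ n) (f z))
    (hg : ∀ z ∈ sphere (0 : ℂ) |R|, HasSum (fun n => b n * z ^ n) (g z)) :
    HasSum (fun n => a n * conj (b n) * (R : ℂ) ^ (2 * n))
      (circleAverage (fun z => f z * conj (g z)) 0 R) := by
  have hnorm : ∀ (c : ℕ → ℂ) (n : ℕ), ∀ z ∈ sphere (0 : ℂ) |R|, ‖c n * z ^ n‖ = ‖c n‖ * |R| ^ n :=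
    fun c n z hz => by rw [norm_mul, norm_pow, mem_sphere_zero_iff_norm.1 hz]
  have hdouble : HasSum (fun p : ℕ × ℕ =>
      circleAverage (fun z => a p.1 * z ^ p.1 * conj (b p.2 * z ^ p.2)) 0 R)
      (circleAverage (fun z => f z * conj (g z)) 0 R) := by
    refine hasSum_circleAverage
      (ha.mul_of_nonneg hb (fun n => by positivity) fun n => by positivity) (fun p => by fun_prop)
      (fun p z hz => ?_) fun z hz => ?_
    · rw [norm_mul, RCLike.norm_conj, hnorm a _ z hz, hnorm b _ z hz]
    · have hbz : HasSum (fun n => conj (b n * z ^ n)) (conj (g z)) :=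
        Complex.hasSum_conj'.2 (hg z hz)
      have hfz : Summable fun n => ‖a n * z ^ n‖ := ha.congr fun n => (hnorm a n z hz).symm
      have hgz : Summable fun n => ‖conj (b n * z ^ n)‖ := hb.congr fun n => by
        rw [RCLike.norm_conj, hnorm b n z hz]
      have hfgz := summable_mul_of_summable_norm hfz hgz
      have hprod := (hf z hz).mul hbz hfgz
      exact hprod
  have hterm : ∀ p : ℕ × ℕ, circleAverage (fun z => a p.1 * z ^ p.1 * conj (b p.2 * z ^ p.2)) 0 R =
      if p.1 = p.2 then a p.1 * conj (b p.2) * (R : ℂ) ^ (2 * p.2) else 0 := fun p => by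
    have hmul : ∀ z : ℂ, a p.1 * z ^ p.1 * conj (b p.2 * z ^ p.2) =
        (a p.1 * conj (b p.2)) • (z ^ p.1 * conj (z ^ p.2)) := fun z => by
      rw [map_mul, smul_eq_mul, mul_mul_mul_comm]
    simp only [hmul]
    rw [circleAverage_fun_smul, circleAverage_pow_mul_conj_pow, smul_eq_mul, mul_ite, mul_zero]
  have hdiag : Function.Injective fun n : ℕ => (n, n) := fun _ _ h => congrArg Prod.fst h
  simp only [hterm] at hdouble
  rw [← hdiag.hasSum_iff fun p hp => if_neg fun h => hp ⟨p.1, Prod.ext rfl h⟩] at hdouble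
  simpa only [Function.comp_def, if_true] using hdouble

lemma hasSum_circleAverage_norm_sq {f : ℂ → ℂ} (ha : Summable fun n => ‖a n‖ * |R| ^ n)
    (hf : ∀ z ∈ sphere (0 : ℂ) |R|, HasSum (fun n => a n * z ^ n) (f z)) :
    HasSum (fun n => ‖a n‖ ^ 2 * R ^ (2 * n)) (circleAverage (fun z => ‖f z‖ ^ 2) 0 R) := by
  have hsum := hasSum_circleAverage_mul_conj ha ha hf hf
  have hreal : circleAverage (fun z => f z * conj (f z)) 0 R =
      (circleAverage (fun z => ‖f z‖ ^ 2) 0 R : ℝ) := by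
    simp only [Complex.mul_conj', circleAverage_def, Complex.real_smul, smul_eq_mul]
    rw [Complex.ofReal_mul, ← intervalIntegral.integral_ofReal]
    push_cast
    rfl
  rw [hreal] at hsum
  refine Complex.hasSum_ofReal.1 ?_
  simpa only [Complex.mul_conj', Complex.ofReal_mul, Complex.ofReal_pow] using hsum

end CircleAverage

/-! ### Weak-type bounds and polar coordinates -/

lemma setLIntegral_Ioc_ofReal {g : ℝ → ℝ} {a b : ℝ} (hab : a ≤ b) (hg : ContinuousOn g (Icc a b))
    (hg0 : ∀ t ∈ Ioc a b, 0 ≤ g t) :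
    ∫⁻ t in Ioc a b, ENNReal.ofReal (g t) = ENNReal.ofReal (∫ t in a..b, g t) := by
  rw [intervalIntegral.integral_of_le hab, ofReal_integral_eq_lintegral_ofReal
    (hg.integrableOn_Icc.mono_set Ioc_subset_Icc_self)]
  exact (ae_restrict_mem measurableSet_Ioc).mono hg0

lemma integral_const_div_of_pos {a b : ℝ} (ha : 0 < a) (hb : 0 < b) (C : ℝ) :
    ∫ t in a..b, C / t = C * log (b / a) := by
  simp only [div_eq_mul_inv C]
  rw [intervalIntegral.integral_const_mul, integral_inv_of_pos ha hb]

lemma setLIntegral_Ioc_ofReal_div {a b C : ℝ} (ha : 0 < a) (hab : a ≤ b) (hC : 0 ≤ C) :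
    ∫⁻ t in Ioc a b, ENNReal.ofReal (C / t) = ENNReal.ofReal (C * log (b / a)) := by
  rw [setLIntegral_Ioc_ofReal hab, integral_const_div_of_pos ha (ha.trans_le hab)]
  · exact continuousOn_const.div continuousOn_id fun t ht => (ha.trans_le ht.1).ne'
  · exact fun t ht => div_nonneg hC (ha.trans ht.1).le

lemma setLIntegral_Ioc_ofReal_div_one_sub {a b C : ℝ} (hab : a ≤ b) (hb : b < 1) (hC : 0 ≤ C) :
    ∫⁻ t in Ioc a b, ENNReal.ofReal (C / (1 - t)) =
      ENNReal.ofReal (C * log ((1 - a) / (1 - b))) := by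
  have hpos : ∀ t, t ≤ b → 0 < 1 - t := fun t ht => by linarith
  rw [setLIntegral_Ioc_ofReal hab, intervalIntegral.integral_comp_sub_left (fun t => C / t) 1,
    integral_const_div_of_pos (hpos b le_rfl) (hpos a hab)]
  · exact continuousOn_const.div (by fun_prop) fun t ht => (hpos t ht.2).ne'
  · exact fun t ht => div_nonneg hC (hpos t ht.2).le

lemma lintegral_ofReal_le_of_meas_lt_le {α : Type*} [MeasurableSpace α] {μ : Measure α} {f : α → ℝ}
    {C Λ : ℝ} (hC : 0 ≤ C) (hΛ : 1 ≤ Λ) (hf : AEMeasurable f μ) (hf0 : 0 ≤ᵐ[μ] f)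
    (hfΛ : ∀ᵐ x ∂μ, f x ≤ Λ) (hweak : ∀ t > 0, μ {x | t < f x} ≤ ENNReal.ofReal (C / t)) :
    ∫⁻ x, ENNReal.ofReal (f x) ∂μ ≤ μ univ + ENNReal.ofReal (C * log Λ) := by
  have hsmall : ∫⁻ t in Ioc 0 1, μ {x | t < f x} ≤ μ univ :=
    calc ∫⁻ t in Ioc 0 1, μ {x | t < f x} ≤ ∫⁻ _ in Ioc (0 : ℝ) 1, μ univ :=
          lintegral_mono fun t => measure_mono (subset_univ _)
      _ = μ univ := by simp
  have hmedium : ∫⁻ t in Ioc 1 Λ, μ {x | t < f x} ≤ ENNReal.ofReal (C * log Λ) :=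
    calc ∫⁻ t in Ioc 1 Λ, μ {x | t < f x} ≤ ∫⁻ t in Ioc 1 Λ, ENNReal.ofReal (C / t) :=
          setLIntegral_mono' measurableSet_Ioc fun t ht => hweak t (one_pos.trans ht.1)
      _ = ENNReal.ofReal (C * log Λ) := by
          rw [setLIntegral_Ioc_ofReal_div one_pos hΛ hC, div_one]
  have hlarge : ∫⁻ t in Ioi Λ, μ {x | t < f x} = 0 := by
    refine (setLIntegral_congr_fun measurableSet_Ioi fun t ht => ?_).trans lintegral_zero
    refine measure_eq_zero_iff_ae_notMem.2 (hfΛ.mono fun x hx => ?_)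
    exact (hx.trans ht.le).not_gt
  have hcover : Ioi (0 : ℝ) ⊆ (Ioc 0 1 ∪ Ioc 1 Λ) ∪ Ioi Λ := by
    rw [Ioc_union_Ioc_eq_Ioc zero_le_one hΛ, Ioc_union_Ioi_eq_Ioi (zero_le_one.trans hΛ)]
  calc ∫⁻ x, ENNReal.ofReal (f x) ∂μ
      = ∫⁻ t in Ioi 0, μ {x | t < f x} := lintegral_eq_lintegral_meas_lt μ hf0 hf
    _ ≤ ∫⁻ t in (Ioc 0 1 ∪ Ioc 1 Λ) ∪ Ioi Λ, μ {x | t < f x} := lintegral_mono_set hcover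
    _ ≤ (∫⁻ t in Ioc 0 1, μ {x | t < f x}) + (∫⁻ t in Ioc 1 Λ, μ {x | t < f x}) +
          ∫⁻ t in Ioi Λ, μ {x | t < f x} :=
        (lintegral_union_le _ _ _).trans (by gcongr; exact lintegral_union_le _ _ _)
    _ ≤ μ univ + ENNReal.ofReal (C * log Λ) := by rw [hlarge, add_zero]; gcongr

lemma setLIntegral_ofReal_comp_circleMap {F : ℂ → ℝ} {c : ℂ} {r : ℝ}
    (hF : ContinuousOn F (sphere c |r|)) (hF0 : ∀ z ∈ sphere c |r|, 0 ≤ F z) :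
    ∫⁻ θ in Ioo (-π) π, ENNReal.ofReal (F (circleMap c r θ)) =
      ENNReal.ofReal (2 * π * circleAverage F c r) := by
  have hmem := circleMap_mem_sphere' c r
  have hcont : Continuous fun θ => F (circleMap c r θ) :=
    hF.comp_continuous (continuous_circleMap c r) hmem
  have hint : ∫ θ in Ioc (-π) π, F (circleMap c r θ) = 2 * π * circleAverage F c r := by
    rw [circleAverage_eq_integral_add (-π), intervalIntegral.integral_comp_add_right
      (fun θ => F (circleMap c r θ)), smul_eq_mul, mul_inv_cancel_left₀ two_pi_pos.ne', zero_add,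
      two_mul, add_neg_cancel_right, intervalIntegral.integral_of_le (by linarith [pi_pos])]
  rw [← hint, setLIntegral_congr Ioo_ae_eq_Ioc, ofReal_integral_eq_lintegral_ofReal]
  · exact (hcont.intervalIntegrable (-π) π).1
  · exact .of_forall fun θ => hF0 _ (hmem θ)

lemma complexPolarCoord_symm_eq_circleMap (p : ℝ × ℝ) :
    Complex.polarCoord.symm p = circleMap 0 p.1 p.2 := by
  rw [Complex.polarCoord_symm_apply, circleMap_zero, Complex.exp_mul_I, Complex.ofReal_cos,
    Complex.ofReal_sin]

lemma setLIntegral_norm_mem_eq_setLIntegral_circleAverage {F : ℂ → ℝ} {s : Set ℝ}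
    (hs : MeasurableSet s) (hs0 : s ⊆ Ioi 0) (hFm : Measurable F)
    (hF : ∀ r ∈ s, ContinuousOn F (sphere 0 r)) (hF0 : ∀ z : ℂ, ‖z‖ ∈ s → 0 ≤ F z) :
    ∫⁻ z in {z : ℂ | ‖z‖ ∈ s}, ENNReal.ofReal (F z) =
      ∫⁻ r in s, ENNReal.ofReal (2 * π * r * circleAverage F 0 r) := by
  have hmeas : MeasurableSet {z : ℂ | ‖z‖ ∈ s} := measurable_norm hs
  have hangle : ∀ r ∈ Ioi (0 : ℝ), ∫⁻ θ in Ioo (-π) π, ENNReal.ofReal r *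
      {z : ℂ | ‖z‖ ∈ s}.indicator (fun z => ENNReal.ofReal (F z)) (circleMap 0 r θ) =
        s.indicator (fun r => ENNReal.ofReal (2 * π * r * circleAverage F 0 r)) r := fun r hr => by
    have hr0 : (0 : ℝ) < r := hr
    have hnorm : ∀ θ, ‖circleMap 0 r θ‖ = r := fun θ => by rw [norm_circleMap_zero, abs_of_pos hr0]
    by_cases hrs : r ∈ s
    · have hcont : ContinuousOn F (sphere 0 |r|) := by
        rw [abs_of_pos hr0]
        exact hF r hrs
      have hnonneg : ∀ z ∈ sphere (0 : ℂ) |r|, 0 ≤ F z := fun z hz =>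
        hF0 z (by rwa [mem_sphere_zero_iff_norm.1 hz, abs_of_pos hr0])
      simp only [indicator, mem_ofPred_eq, hnorm, hrs, if_true]
      rw [lintegral_const_mul' _ _ ENNReal.ofReal_ne_top,
        setLIntegral_ofReal_comp_circleMap hcont hnonneg,
        ← ENNReal.ofReal_mul hr0.le, mul_left_comm, ← mul_assoc]
    · simp [indicator, hnorm, hrs]
  rw [← lintegral_indicator hmeas, ← Complex.lintegral_comp_polarCoord_symm, polarCoord_target,
    Measure.volume_eq_prod, ← Measure.prod_restrict, lintegral_prod]
  · simp only [complexPolarCoord_symm_eq_circleMap, smul_eq_mul]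
    rw [setLIntegral_congr_fun measurableSet_Ioi hangle, setLIntegral_indicator hs,
      inter_eq_left.2 hs0]
  · have : Measurable ({z : ℂ | ‖z‖ ∈ s}.indicator fun z => ENNReal.ofReal (F z)) :=
      hFm.ennreal_ofReal.indicator hmeas
    have hcircle : Measurable fun p : ℝ × ℝ => circleMap 0 p.1 p.2 := by
      simp only [circleMap_zero]
      fun_prop
    simp only [complexPolarCoord_symm_eq_circleMap, smul_eq_mul]
    fun_prop

/-! ### Taylor coefficients and the weak-type estimate -/

/-- The coefficient of `z ^ n` in the Taylor series of `f` at the origin. -/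
def taylorCoeff (f : ℂ → ℂ) (n : ℕ) : ℂ := (n.factorial : ℂ)⁻¹ * iteratedDeriv n f 0

section Taylor

variable {f : ℂ → ℂ} {R r : ℝ} {z : ℂ}

lemma hasSum_taylorCoeff (hf : DifferentiableOn ℂ f (ball 0 R)) (hz : z ∈ ball (0 : ℂ) R) :
    HasSum (fun n => taylorCoeff f n * z ^ n) (f z) := by
  refine (Complex.hasSum_taylorSeries_on_ball hf hz).congr_fun fun n => ?_
  rw [taylorCoeff, sub_zero, smul_eq_mul, smul_eq_mul, mul_assoc, mul_comm (z ^ n)]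

lemma taylorCoeff_deriv (f : ℂ → ℂ) (n : ℕ) :
    taylorCoeff (deriv f) n = (n + 1) * taylorCoeff f (n + 1) := by
  rw [taylorCoeff, taylorCoeff, iteratedDeriv_succ', Nat.factorial_succ]
  push_cast
  have : (n : ℂ) + 1 ≠ 0 := Nat.cast_add_one_ne_zero n
  field_simp

lemma hasSum_nat_mul_taylorCoeff (hf : DifferentiableOn ℂ f (ball 0 R))
    (hz : z ∈ ball (0 : ℂ) R) : HasSum (fun n => n * taylorCoeff f n * z ^ n) (z * deriv f z) := by
  have hderiv := (hasSum_taylorCoeff (hf.deriv isOpen_ball) hz).mul_left z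
  rw [← hasSum_nat_add_iff' 1]
  simp only [sum_range_one, Nat.cast_zero, zero_mul, sub_zero]
  refine hderiv.congr_fun fun n => ?_
  rw [taylorCoeff_deriv]
  push_cast
  ring

lemma sum_nat_mul_norm_sq_taylorCoeff_le (hf : DifferentiableOn ℂ f (ball 0 R))
    (hf1 : ∀ z ∈ ball (0 : ℂ) R, ‖f z‖ ≤ 1) (hr0 : 0 ≤ r) (hr : r < R) (s : Finset ℕ) :
    ∑ n ∈ s, n * ‖taylorCoeff f n‖ ^ 2 * r ^ (2 * n) ≤
      r * circleAverage (fun z => ‖deriv f z‖) 0 r := by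
  have habs : |r| < R := (abs_of_nonneg hr0).trans_lt hr
  have hsphere : sphere (0 : ℂ) |r| ⊆ ball 0 R := sphere_subset_ball habs
  have hrmem : (r : ℂ) ∈ ball (0 : ℂ) R := by
    rwa [mem_ball_zero_iff, Complex.norm_real, norm_eq_abs]
  have hparseval : HasSum (fun n => ((n * ‖taylorCoeff f n‖ ^ 2 * r ^ (2 * n) : ℝ) : ℂ))
      (circleAverage (fun z => z * deriv f z * conj (f z)) 0 r) := by
    refine (hasSum_circleAverage_mul_conj
      (summable_norm_mul_abs_pow (hasSum_nat_mul_taylorCoeff hf hrmem).summable)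
      (summable_norm_mul_abs_pow (hasSum_taylorCoeff hf hrmem).summable)
      (fun z hz => hasSum_nat_mul_taylorCoeff hf (hsphere hz))
      fun z hz => hasSum_taylorCoeff hf (hsphere hz)).congr_fun fun n => ?_
    push_cast
    rw [← Complex.mul_conj', ← mul_assoc (n : ℂ)]
  have hcont : ContinuousOn f (sphere 0 |r|) := hf.continuousOn.mono hsphere
  have hcont' : ContinuousOn (deriv f) (sphere 0 |r|) :=
    (hf.deriv isOpen_ball).continuousOn.mono hsphere
  have hsum := Complex.hasSum_re hparseval
  simp only [Complex.ofReal_re] at hsum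
  calc ∑ n ∈ s, n * ‖taylorCoeff f n‖ ^ 2 * r ^ (2 * n)
      ≤ (circleAverage (fun z => z * deriv f z * conj (f z)) 0 r).re :=
        sum_le_hasSum s (fun n _ => by positivity) hsum
    _ ≤ ‖circleAverage (fun z => z * deriv f z * conj (f z)) 0 r‖ := Complex.re_le_norm _
    _ ≤ circleAverage (fun z => ‖z * deriv f z * conj (f z)‖) 0 r :=
        norm_circleAverage_le_circleAverage_norm _ _ _
    _ ≤ circleAverage (fun z => r • ‖deriv f z‖) 0 r := by
        refine circleAverage_mono (ContinuousOn.circleIntegrable' ?_)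
          (ContinuousOn.circleIntegrable' ?_) fun z hz => ?_
        · exact ((continuousOn_id.mul hcont').mul
            (Complex.continuous_conj.comp_continuousOn hcont)).norm
        · exact hcont'.norm.const_smul r
        · rw [norm_mul, norm_mul, RCLike.norm_conj, mem_sphere_zero_iff_norm.1 hz,
            abs_of_nonneg hr0, smul_eq_mul]
          exact mul_le_of_le_one_right (by positivity) (hf1 z (hsphere hz))
    _ = r * circleAverage (fun z => ‖deriv f z‖) 0 r := by
        rw [circleAverage_fun_smul, smul_eq_mul]

lemma norm_deriv_le_two_div_one_sub_norm (hf : DifferentiableOn ℂ f (ball 0 1))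
    (hf1 : ∀ z ∈ ball (0 : ℂ) 1, ‖f z‖ ≤ 1) (hz : z ∈ ball (0 : ℂ) 1) :
    ‖deriv f z‖ ≤ 2 / (1 - ‖z‖) := by
  have hz1 : ‖z‖ < 1 := mem_ball_zero_iff.1 hz
  have hsub : ball z (1 - ‖z‖) ⊆ ball 0 1 := ball_subset_ball' (by rw [dist_zero_right]; linarith)
  refine Complex.norm_deriv_le_div_of_mapsTo_ball (hf.mono hsub) (fun w hw => ?_) (sub_pos.2 hz1)
  rw [mem_closedBall, dist_eq_norm]
  linarith [norm_sub_le (f w) (f z), hf1 w (hsub hw), hf1 z hz]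

lemma le_setLIntegral_norm_deriv_div_one_sub_norm (hf : DifferentiableOn ℂ f (ball 0 1))
    (hf1 : ∀ z ∈ ball (0 : ℂ) 1, ‖f z‖ ≤ 1) {ρ : ℝ} (hr0 : 0 ≤ r) (hrρ : r ≤ ρ) (hρ : ρ < 1)
    (s : Finset ℕ) :
    ENNReal.ofReal (2 * π * (∑ n ∈ s, n * ‖taylorCoeff f n‖ ^ 2 * r ^ (2 * n)) *
        log ((1 - r) / (1 - ρ))) ≤
      ∫⁻ z in {z : ℂ | ‖z‖ ∈ Ioc r ρ}, ENNReal.ofReal (‖deriv f z‖ / (1 - ‖z‖)) := by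
  have hmeas : Measurable fun z => ‖deriv f z‖ / (1 - ‖z‖) :=
    (measurable_deriv f).norm.div (measurable_const.sub measurable_norm)
  have hcont : ∀ t ∈ Ioc r ρ, ContinuousOn (fun z => ‖deriv f z‖ / (1 - ‖z‖)) (sphere 0 t) := by
    refine fun t ht => (((hf.deriv isOpen_ball).continuousOn.mono
      (sphere_subset_ball (ht.2.trans_lt hρ))).norm).div (by fun_prop) fun z hz => ?_
    rw [mem_sphere_zero_iff_norm.1 hz]
    exact (sub_pos.2 (ht.2.trans_lt hρ)).ne'
  rw [← setLIntegral_Ioc_ofReal_div_one_sub hrρ hρ (by positivity),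
    setLIntegral_norm_mem_eq_setLIntegral_circleAverage measurableSet_Ioc
      (fun t ht => hr0.trans_lt ht.1) hmeas hcont
      fun z hz => div_nonneg (norm_nonneg _) (by linarith [hz.2])]
  refine setLIntegral_mono' measurableSet_Ioc fun t ht => ENNReal.ofReal_le_ofReal ?_
  have ht0 : 0 < t := hr0.trans_lt ht.1
  have ht1 : t < 1 := ht.2.trans_lt hρ
  have havg : circleAverage (fun z => ‖deriv f z‖ / (1 - ‖z‖)) 0 t =
      circleAverage (fun z => ‖deriv f z‖) 0 t / (1 - t) := by
    rw [div_eq_inv_mul, ← smul_eq_mul, ← circleAverage_fun_smul]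
    refine circleAverage_congr_sphere fun z hz => ?_
    simp only [mem_sphere_zero_iff_norm.1 hz, abs_of_pos ht0, smul_eq_mul, div_eq_inv_mul]
  have hsum : ∑ n ∈ s, n * ‖taylorCoeff f n‖ ^ 2 * r ^ (2 * n) ≤
      t * circleAverage (fun z => ‖deriv f z‖) 0 t :=
    (sum_le_sum fun n _ => by gcongr; exact ht.1.le).trans
      (sum_nat_mul_norm_sq_taylorCoeff_le hf hf1 ht0.le ht1 s)
  rw [havg, mul_div_assoc', mul_assoc (2 * π)]
  gcongr

variable {C : ℝ}

lemma setLIntegral_norm_deriv_div_one_sub_norm_le (hf : DifferentiableOn ℂ f (ball 0 1))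
    (hf1 : ∀ z ∈ ball (0 : ℂ) 1, ‖f z‖ ≤ 1) (hC : 0 ≤ C)
    (hweak : ∀ t > 0, volume {z ∈ ball (0 : ℂ) 1 | t * (1 - ‖z‖) < ‖deriv f z‖} ≤
      ENNReal.ofReal (C / t)) {ρ : ℝ} (hr0 : 0 ≤ r) (hrρ : r ≤ ρ) (hρ : ρ < 1) :
    ∫⁻ z in {z : ℂ | ‖z‖ ∈ Ioc r ρ}, ENNReal.ofReal (‖deriv f z‖ / (1 - ‖z‖)) ≤
      ENNReal.ofReal (π + C * log (2 / (1 - ρ) ^ 2)) := by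
  set A : Set ℂ := {z | ‖z‖ ∈ Ioc r ρ}
  have hA : MeasurableSet A := measurable_norm measurableSet_Ioc
  have hA1 : A ⊆ ball 0 1 := fun z hz => mem_ball_zero_iff.2 (hz.2.trans_lt hρ)
  have hΛ : 1 ≤ 2 / (1 - ρ) ^ 2 := by
    rw [one_le_div (pow_pos (sub_pos.2 hρ) 2)]
    nlinarith
  have hmeas : Measurable fun z => ‖deriv f z‖ / (1 - ‖z‖) :=
    (measurable_deriv f).norm.div (measurable_const.sub measurable_norm)
  have hpos : ∀ z ∈ A, 0 < 1 - ‖z‖ := fun z hz => sub_pos.2 (mem_ball_zero_iff.1 (hA1 hz))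
  have harea : volume.restrict A univ ≤ ENNReal.ofReal π := by
    rw [Measure.restrict_apply_univ]
    refine (measure_mono hA1).trans_eq ?_
    rw [Complex.volume_ball, ENNReal.ofReal_one, one_pow, one_mul, ← NNReal.coe_real_pi,
      ENNReal.ofReal_coe_nnreal]
  rw [ENNReal.ofReal_add pi_pos.le (mul_nonneg hC (log_nonneg hΛ))]
  refine (lintegral_ofReal_le_of_meas_lt_le hC hΛ hmeas.aemeasurable ?_ ?_ fun t ht => ?_).trans
    (by gcongr)
  · filter_upwards [ae_restrict_mem hA] with z hz
    exact div_nonneg (norm_nonneg _) (hpos z hz).le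
  · filter_upwards [ae_restrict_mem hA] with z hz
    have hρz : 1 - ρ ≤ 1 - ‖z‖ := by linarith [hz.2]
    have : 0 < 1 - ρ := sub_pos.2 hρ
    calc ‖deriv f z‖ / (1 - ‖z‖) ≤ 2 / (1 - ‖z‖) / (1 - ‖z‖) := by
          gcongr
          · exact (hpos z hz).le
          · exact norm_deriv_le_two_div_one_sub_norm hf hf1 (hA1 hz)
      _ = 2 / (1 - ‖z‖) ^ 2 := by rw [div_div, sq]
      _ ≤ 2 / (1 - ρ) ^ 2 := by gcongr
  · rw [Measure.restrict_apply (measurableSet_lt measurable_const hmeas)]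
    refine (measure_mono fun z hz => ?_).trans (hweak t ht)
    exact ⟨hA1 hz.2, (lt_div_iff₀ (hpos z hz.2)).1 hz.1⟩

lemma le_of_eventually_mul_add_le_mul_add {a b c d : ℝ}
    (h : ∀ᶠ x in atTop, a * x + b ≤ c * x + d) : a ≤ c := by
  by_contra! hca
  obtain ⟨x, hx, hlt⟩ := (h.and ((tendsto_id.const_mul_atTop (sub_pos.2 hca)).eventually_gt_atTop
    (d - b))).exists
  rw [id, sub_mul] at hlt
  linarith

/- Both bounds for the integral of `‖f'‖ / (1 - ‖z‖)` over `r < ‖z‖ ≤ 1 - exp (-x)` are affine in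
`x`; compare their slopes. -/
lemma sum_nat_mul_norm_sq_taylorCoeff_mul_pow_le (hf : DifferentiableOn ℂ f (ball 0 1))
    (hf1 : ∀ z ∈ ball (0 : ℂ) 1, ‖f z‖ ≤ 1) (hC : 0 ≤ C)
    (hweak : ∀ t > 0, volume {z ∈ ball (0 : ℂ) 1 | t * (1 - ‖z‖) < ‖deriv f z‖} ≤
      ENNReal.ofReal (C / t)) (hr0 : 0 ≤ r) (hr1 : r < 1) (s : Finset ℕ) :
    ∑ n ∈ s, n * ‖taylorCoeff f n‖ ^ 2 * r ^ (2 * n) ≤ C / π := by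
  set S := ∑ n ∈ s, n * ‖taylorCoeff f n‖ ^ 2 * r ^ (2 * n)
  have hslope : 2 * π * S ≤ 2 * C := by
    refine le_of_eventually_mul_add_le_mul_add (b := 2 * π * S * log (1 - r))
      (d := π + C * log 2) ?_
    have hρ : Tendsto (fun x => 1 - exp (-x)) atTop (𝓝 1) := by
      simpa using tendsto_exp_neg_atTop_nhds_zero.const_sub 1
    filter_upwards [hρ.eventually_const_le hr1, eventually_ge_atTop 0] with x hrx hx
    have hx1 : 1 - exp (-x) < 1 := sub_lt_self _ (exp_pos _)
    have hbounds := (le_setLIntegral_norm_deriv_div_one_sub_norm hf hf1 hr0 hrx hx1 s).trans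
      (setLIntegral_norm_deriv_div_one_sub_norm_le hf hf1 hC hweak hr0 hrx hx1)
    have hlog : log (2 / exp (-x) ^ 2) = log 2 + 2 * x := by
      rw [log_div two_ne_zero (by positivity), log_pow, log_exp]
      push_cast
      ring
    have hlog2 : 0 ≤ log 2 := log_nonneg one_le_two
    rw [sub_sub_cancel, ENNReal.ofReal_le_ofReal_iff (by rw [hlog]; positivity), hlog,
      log_div (sub_pos.2 hr1).ne' (exp_ne_zero _), log_exp] at hbounds
    linarith
  rw [le_div_iff₀ pi_pos]
  linarith

lemma summable_nat_mul_norm_sq_taylorCoeff (hf : DifferentiableOn ℂ f (ball 0 1))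
    (hf1 : ∀ z ∈ ball (0 : ℂ) 1, ‖f z‖ ≤ 1) (hC : 0 ≤ C)
    (hweak : ∀ t > 0, volume {z ∈ ball (0 : ℂ) 1 | t * (1 - ‖z‖) < ‖deriv f z‖} ≤
      ENNReal.ofReal (C / t)) :
    Summable fun n => n * ‖taylorCoeff f n‖ ^ 2 := by
  refine summable_of_sum_le (c := C / π) (fun n => by positivity) fun s => ?_
  have hlim : Tendsto (fun r : ℝ => ∑ n ∈ s, n * ‖taylorCoeff f n‖ ^ 2 * r ^ (2 * n)) (𝓝[<] 1)
      (𝓝 (∑ n ∈ s, n * ‖taylorCoeff f n‖ ^ 2)) := by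
    refine tendsto_nhdsWithin_of_tendsto_nhds (Continuous.tendsto' (by fun_prop) _ _ ?_)
    simp only [one_pow, mul_one]
  refine le_of_tendsto hlim ?_
  filter_upwards [Ioo_mem_nhdsLT one_pos] with r hr
  exact sum_nat_mul_norm_sq_taylorCoeff_mul_pow_le hf hf1 hC hweak hr.1.le hr.2 s

end Taylor

/-! ### Holomorphic functions whose modulus tends to one at the circle -/

/-- The filter of points of the open unit disc tending to the unit circle. -/
def discBoundary : Filter ℂ := comap norm (𝓝[<] 1)

lemma eventually_discBoundary_iff {p : ℂ → Prop} :
    (∀ᶠ z in discBoundary, p z) ↔ ∃ ρ < (1 : ℝ), ∀ z : ℂ, ρ < ‖z‖ → ‖z‖ < 1 → p z := by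
  rw [discBoundary, eventually_comap, (nhdsLT_basis (1 : ℝ)).eventually_iff]
  simp only [Set.mem_Ioo, and_imp]
  exact exists_congr fun ρ => and_congr_right fun _ =>
    ⟨fun h z h₁ h₂ => h h₁ h₂ z rfl, fun h _ h₁ h₂ z hz => h z (hz ▸ h₁) (hz ▸ h₂)⟩

lemma tendsto_norm_discBoundary : Tendsto (fun z : ℂ => ‖z‖) discBoundary (𝓝 1) :=
  tendsto_comap.mono_right nhdsWithin_le_nhds

lemma eventually_mem_ball_discBoundary : ∀ᶠ z in discBoundary, z ∈ ball (0 : ℂ) 1 :=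
  eventually_discBoundary_iff.2 ⟨0, one_pos, fun _ _ h => mem_ball_zero_iff.2 h⟩

lemma norm_le_of_tendsto_discBoundary {g : ℂ → ℂ} {M : ℝ} (hg : DifferentiableOn ℂ g (ball 0 1))
    (ht : Tendsto (fun z => ‖g z‖) discBoundary (𝓝 M)) {z : ℂ} (hz : z ∈ ball (0 : ℂ) 1) :
    ‖g z‖ ≤ M := by
  refine le_of_forall_gt_imp_ge_of_dense fun M' hM' => ?_
  obtain ⟨ρ, hρ, hgρ⟩ := eventually_discBoundary_iff.1 (ht.eventually_le_const hM')
  obtain ⟨R, hR, hR1⟩ := exists_between (max_lt hρ (mem_ball_zero_iff.1 hz))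
  obtain ⟨hρR, hzR⟩ := max_lt_iff.1 hR
  have hR0 : R ≠ 0 := ((norm_nonneg z).trans_lt hzR).ne'
  refine Complex.norm_le_of_forall_mem_frontier_norm_le (isBounded_ball (x := 0) (r := R))
    (DifferentiableOn.diffContOnCl ?_) (fun w hw => ?_) (subset_closure (mem_ball_zero_iff.2 hzR))
  · rw [closure_ball _ hR0]
    exact hg.mono (closedBall_subset_ball hR1)
  · rw [frontier_ball _ hR0, mem_sphere_zero_iff_norm] at hw
    exact hgρ w (hw ▸ hρR) (hw ▸ hR1)

lemma IsFiniteBlaschkeProduct.of_forall_ne_zero {g : ℂ → ℂ}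
    (hg : DifferentiableOn ℂ g (ball 0 1))
    (ht : Tendsto (fun z => ‖g z‖) discBoundary (𝓝 1)) (h0 : ∀ z ∈ ball (0 : ℂ) 1, g z ≠ 0) :
    IsFiniteBlaschkeProduct g := by
  have hnorm : ∀ z ∈ ball (0 : ℂ) 1, ‖g z‖ = 1 := fun z hz => by
    refine (norm_le_of_tendsto_discBoundary hg ht hz).antisymm ?_
    have hinv : ‖(g z)⁻¹‖ ≤ 1 := norm_le_of_tendsto_discBoundary (hg.inv h0)
      (by simpa using ht.inv₀ one_ne_zero) hz
    rwa [norm_inv, inv_le_one₀ (norm_pos_iff.2 (h0 z hz))] at hinv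
  have hzero : (0 : ℂ) ∈ ball (0 : ℂ) 1 := mem_ball_self one_pos
  have hconst := Complex.eqOn_of_isPreconnected_of_isMaxOn_norm
    (convex_ball (0 : ℂ) 1).isPreconnected isOpen_ball hg hzero fun z hz => by
      simp [hnorm z hz, hnorm 0 hzero]
  exact ⟨g 0, 0, Fin.elim0, hnorm 0 hzero, fun i => i.elim0, fun z hz => by simpa using hconst hz⟩

/-- The disc automorphism exchanging `0` and `a`, with the normalisation `(a - z) / (1 - āz)` of
the factors of `IsFiniteBlaschkeProduct`. -/
def blaschkeFactor (a z : ℂ) : ℂ := (a - z) / (1 - conj a * z)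

lemma one_sub_conj_mul_ne_zero {a z : ℂ} (ha : ‖a‖ < 1) (hz : ‖z‖ ≤ 1) : 1 - conj a * z ≠ 0 := by
  refine sub_ne_zero.2 fun h => (?_ : ‖conj a * z‖ < 1).ne (by rw [← h, norm_one])
  rw [norm_mul, RCLike.norm_conj]
  exact mul_lt_one_of_nonneg_of_lt_one_left (norm_nonneg a) ha hz

lemma analyticAt_blaschkeFactor {a z : ℂ} (ha : ‖a‖ < 1) (hz : ‖z‖ ≤ 1) :
    AnalyticAt ℂ (blaschkeFactor a) z :=
  AnalyticAt.div (by fun_prop) (by fun_prop) (one_sub_conj_mul_ne_zero ha hz)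

lemma norm_sq_one_sub_conj_mul_sub_norm_sq_sub (a z : ℂ) :
    ‖1 - conj a * z‖ ^ 2 - ‖a - z‖ ^ 2 = (1 - ‖a‖ ^ 2) * (1 - ‖z‖ ^ 2) := by
  simp only [← Complex.normSq_eq_norm_sq, Complex.normSq_apply, Complex.sub_re, Complex.sub_im,
    Complex.mul_re, Complex.mul_im, Complex.conj_re, Complex.conj_im, Complex.one_re,
    Complex.one_im]
  ring

lemma norm_sq_blaschkeFactor {a z : ℂ} (ha : ‖a‖ < 1) (hz : ‖z‖ ≤ 1) :
    ‖blaschkeFactor a z‖ ^ 2 = 1 - (1 - ‖a‖ ^ 2) * (1 - ‖z‖ ^ 2) / ‖1 - conj a * z‖ ^ 2 := by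
  have hden : ‖1 - conj a * z‖ ≠ 0 := norm_ne_zero_iff.2 (one_sub_conj_mul_ne_zero ha hz)
  rw [blaschkeFactor, norm_div, div_pow, ← norm_sq_one_sub_conj_mul_sub_norm_sq_sub,
    sub_div, div_self (pow_ne_zero 2 hden), sub_sub_cancel]

lemma norm_blaschkeFactor_lt_one {a z : ℂ} (ha : ‖a‖ < 1) (hz : ‖z‖ < 1) :
    ‖blaschkeFactor a z‖ < 1 := by
  rw [← sq_lt_one_iff₀ (norm_nonneg _), norm_sq_blaschkeFactor ha hz.le, sub_lt_self_iff]
  have hden := norm_pos_iff.2 (one_sub_conj_mul_ne_zero ha hz.le)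
  have hsq : ∀ w : ℂ, ‖w‖ < 1 → 0 < 1 - ‖w‖ ^ 2 := fun w hw =>
    sub_pos.2 (pow_lt_one₀ (norm_nonneg w) hw two_ne_zero)
  exact div_pos (mul_pos (hsq a ha) (hsq z hz)) (by positivity)

lemma tendsto_norm_blaschkeFactor_discBoundary {a : ℂ} (ha : ‖a‖ < 1) :
    Tendsto (fun z => ‖blaschkeFactor a z‖) discBoundary (𝓝 1) := by
  have hcont : Tendsto (fun z : ℂ => 1 - (1 - ‖a‖ ^ 2) * (1 - ‖z‖ ^ 2) / (1 - ‖a‖) ^ 2)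
      discBoundary (𝓝 1) := by
    simpa using (((tendsto_norm_discBoundary.pow 2).const_sub 1).const_mul
      (1 - ‖a‖ ^ 2)).div_const ((1 - ‖a‖) ^ 2) |>.const_sub 1
  have hsq : Tendsto (fun z => ‖blaschkeFactor a z‖ ^ 2) discBoundary (𝓝 1) := by
    refine tendsto_of_tendsto_of_tendsto_of_le_of_le' hcont tendsto_const_nhds ?_ ?_ <;>
      filter_upwards [eventually_mem_ball_discBoundary] with z hz <;>
      rw [mem_ball_zero_iff] at hz
    · have hden : 1 - ‖a‖ ≤ ‖1 - conj a * z‖ := by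
        have := norm_sub_norm_le (1 : ℂ) (conj a * z)
        rw [norm_one, norm_mul, RCLike.norm_conj] at this
        nlinarith [norm_nonneg a, norm_nonneg z]
      have : 0 < 1 - ‖a‖ := sub_pos.2 ha
      have hnum : 0 ≤ (1 - ‖a‖ ^ 2) * (1 - ‖z‖ ^ 2) :=
        mul_nonneg (by nlinarith [norm_nonneg a]) (by nlinarith [norm_nonneg z])
      rw [norm_sq_blaschkeFactor ha hz.le]
      gcongr
    · exact pow_le_one₀ (norm_nonneg _) (norm_blaschkeFactor_lt_one ha hz).le
  simpa using hsq.sqrt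

lemma exists_norm_blaschkeFactor_le {ρ : ℝ} (hρ0 : 0 ≤ ρ) (hρ : ρ < 1) {z : ℂ} (hz : ‖z‖ < 1) :
    ∃ κ < (1 : ℝ), ∀ a : ℂ, ‖a‖ ≤ ρ → ‖blaschkeFactor a z‖ ≤ κ := by
  have hlt : ∀ a ∈ closedBall (0 : ℂ) ρ, ‖a‖ < 1 := fun a ha =>
    (mem_closedBall_zero_iff.1 ha).trans_lt hρ
  have hcont : ContinuousOn (fun a => ‖blaschkeFactor a z‖) (closedBall 0 ρ) := by
    refine (ContinuousOn.div ?_ ?_ fun a ha => one_sub_conj_mul_ne_zero (hlt a ha) hz.le).norm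
    · fun_prop
    · exact (continuous_const.sub (Complex.continuous_conj.mul continuous_const)).continuousOn
  obtain ⟨a₀, ha₀, hmax⟩ := (isCompact_closedBall (0 : ℂ) ρ).exists_isMaxOn
    (nonempty_closedBall.2 hρ0) hcont
  exact ⟨_, norm_blaschkeFactor_lt_one (hlt a₀ ha₀) hz,
    fun a ha => hmax (mem_closedBall_zero_iff.2 ha)⟩

lemma IsFiniteBlaschkeProduct.of_eq_blaschkeFactor_mul {a : ℂ} {g q : ℂ → ℂ}
    (hq : IsFiniteBlaschkeProduct q) (ha : ‖a‖ < 1)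
    (hgq : ∀ z ∈ ball (0 : ℂ) 1, g z = blaschkeFactor a z * q z) : IsFiniteBlaschkeProduct g := by
  obtain ⟨ξ, n, b, hξ, hb, hq⟩ := hq
  refine ⟨ξ, n + 1, Fin.cons a b, hξ, Fin.cases ha hb, fun z hz => ?_⟩
  rw [hgq z hz, hq z hz, Fin.prod_univ_succ]
  exact mul_left_comm _ _ _

lemma exists_eq_blaschkeFactor_mul {g : ℂ → ℂ} (hg : DifferentiableOn ℂ g (ball 0 1)) {a : ℂ}
    (ha : a ∈ ball (0 : ℂ) 1) (hga : g a = 0) :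
    ∃ q : ℂ → ℂ, DifferentiableOn ℂ q (ball 0 1) ∧
      ∀ z ∈ ball (0 : ℂ) 1, g z = blaschkeFactor a z * q z := by
  have hslope := (Complex.differentiableOn_dslope (isOpen_ball.mem_nhds ha)).2 hg
  refine ⟨fun z => -(1 - conj a * z) * dslope g a z, DifferentiableOn.mul (by fun_prop) hslope,
    fun z hz => ?_⟩
  have hden := one_sub_conj_mul_ne_zero (mem_ball_zero_iff.1 ha) (mem_ball_zero_iff.1 hz).le
  have hfactor : (z - a) * dslope g a z = g z := by
    simpa only [hga, sub_zero, smul_eq_mul] using sub_smul_dslope g a z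
  rw [← hfactor, blaschkeFactor, div_mul_eq_mul_div, eq_div_iff hden]
  ring

lemma tendsto_norm_discBoundary_of_eq_blaschkeFactor_mul {a : ℂ} (ha : ‖a‖ < 1) {g q : ℂ → ℂ}
    (ht : Tendsto (fun z => ‖g z‖) discBoundary (𝓝 1))
    (hgq : ∀ z ∈ ball (0 : ℂ) 1, g z = blaschkeFactor a z * q z) :
    Tendsto (fun z => ‖q z‖) discBoundary (𝓝 1) := by
  have hφ := tendsto_norm_blaschkeFactor_discBoundary ha
  have hquot := ht.div hφ one_ne_zero
  rw [div_one] at hquot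
  refine hquot.congr' ?_
  filter_upwards [eventually_mem_ball_discBoundary, hφ.eventually_ne one_ne_zero] with z hz hne
  rw [Pi.div_apply, hgq z hz, norm_mul, mul_div_cancel_left₀ _ hne]

/- Each division by a Blaschke factor multiplies `‖g z₀‖` by at least `κ⁻¹`, while the quotient
stays bounded by `1`; so at most `n` zeros can be divided out. -/
lemma IsFiniteBlaschkeProduct.of_pow_lt_norm {ρ κ : ℝ} {z₀ : ℂ}
    (hz₀ : z₀ ∈ ball (0 : ℂ) 1) (hκ : ∀ a : ℂ, ‖a‖ ≤ ρ → ‖blaschkeFactor a z₀‖ ≤ κ) (n : ℕ)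
    {g : ℂ → ℂ} (hg : DifferentiableOn ℂ g (ball 0 1))
    (ht : Tendsto (fun z => ‖g z‖) discBoundary (𝓝 1))
    (hzeros : ∀ z ∈ ball (0 : ℂ) 1, g z = 0 → ‖z‖ ≤ ρ) (hn : κ ^ n < ‖g z₀‖) :
    IsFiniteBlaschkeProduct g := by
  induction n generalizing g with
  | zero =>
    rw [pow_zero] at hn
    exact absurd (norm_le_of_tendsto_discBoundary hg ht hz₀) hn.not_ge
  | succ n ih =>
    by_cases h0 : ∀ z ∈ ball (0 : ℂ) 1, g z ≠ 0
    · exact .of_forall_ne_zero hg ht h0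
    push Not at h0
    obtain ⟨a, ha, hga⟩ := h0
    have ha1 : ‖a‖ < 1 := mem_ball_zero_iff.1 ha
    obtain ⟨q, hq, hgq⟩ := exists_eq_blaschkeFactor_mul hg ha hga
    refine .of_eq_blaschkeFactor_mul (ih hq
      (tendsto_norm_discBoundary_of_eq_blaschkeFactor_mul ha1 ht hgq)
      (fun z hz hqz => hzeros z hz (by rw [hgq z hz, hqz, mul_zero])) ?_) ha1 hgq
    have hκa := hκ a (hzeros a ha hga)
    refine lt_of_mul_lt_mul_left ?_ ((norm_nonneg _).trans hκa)
    calc κ * κ ^ n = κ ^ (n + 1) := (pow_succ' κ n).symm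
      _ < ‖g z₀‖ := hn
      _ = ‖blaschkeFactor a z₀‖ * ‖q z₀‖ := by rw [hgq z₀ hz₀, norm_mul]
      _ ≤ κ * ‖q z₀‖ := by gcongr

lemma IsFiniteBlaschkeProduct.of_tendsto_discBoundary {g : ℂ → ℂ}
    (hg : DifferentiableOn ℂ g (ball 0 1))
    (ht : Tendsto (fun z => ‖g z‖) discBoundary (𝓝 1)) : IsFiniteBlaschkeProduct g := by
  obtain ⟨ρ', hρ', hne⟩ := eventually_discBoundary_iff.1 (ht.eventually_ne one_ne_zero)
  set ρ := max ρ' 0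
  have hρ : ρ < 1 := max_lt hρ' one_pos
  obtain ⟨R, hρR, hR⟩ := exists_between hρ
  obtain ⟨hρ'R, hR0⟩ := max_lt_iff.1 hρR
  have hnormR : ‖(R : ℂ)‖ = R := Complex.norm_of_nonneg hR0.le
  obtain ⟨κ, hκ, hφ⟩ := exists_norm_blaschkeFactor_le (le_max_right ρ' 0) hρ (hnormR.trans_lt hR)
  have hgR : 0 < ‖g R‖ := (norm_nonneg _).lt_of_ne' (hne R (by rwa [hnormR]) (by rwa [hnormR]))
  obtain ⟨n, hn⟩ := exists_pow_lt_of_lt_one hgR hκ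
  refine .of_pow_lt_norm (by rwa [mem_ball_zero_iff, hnormR]) hφ n hg ht (fun z hz hgz => ?_) hn
  by_contra! hlt
  exact hne z ((le_max_left _ _).trans_lt hlt) (mem_ball_zero_iff.1 hz) (by rw [hgz, norm_zero])

/-! ### Finite Blaschke products satisfy the weak-type estimate -/

lemma IsFiniteBlaschkeProduct.exists_norm_deriv_le {B : ℂ → ℂ} (hB : IsFiniteBlaschkeProduct B) :
    ∃ M > (0 : ℝ), ∀ z ∈ ball (0 : ℂ) 1, ‖deriv B z‖ ≤ M := by
  obtain ⟨ξ, n, a, -, ha, hBa⟩ := hB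
  set Q : ℂ → ℂ := fun z => ξ * ∏ i, blaschkeFactor (a i) z
  have hQ : AnalyticOnNhd ℂ Q (closedBall 0 1) := fun z hz =>
    analyticAt_const.mul (Finset.analyticAt_fun_prod _ fun i _ =>
      analyticAt_blaschkeFactor (ha i) (mem_closedBall_zero_iff.1 hz))
  obtain ⟨M, hM⟩ := (isCompact_closedBall (0 : ℂ) 1).exists_bound_of_continuousOn
    hQ.deriv.continuousOn
  refine ⟨max M 1, lt_max_of_lt_right one_pos, fun z hz => ?_⟩
  have hBQ : B =ᶠ[𝓝 z] Q := eventually_of_mem (isOpen_ball.mem_nhds hz) hBa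
  rw [hBQ.deriv_eq]
  exact (hM z (ball_subset_closedBall hz)).trans (le_max_left _ _)

lemma volume_ball_inter_one_sub_norm_lt_le {δ : ℝ} (hδ : 0 ≤ δ) :
    volume {z ∈ ball (0 : ℂ) 1 | 1 - ‖z‖ < δ} ≤ ENNReal.ofReal (2 * π * δ) := by
  set t := max (1 - δ) 0
  have ht0 : 0 ≤ t := le_max_right _ _
  have ht1 : t ≤ 1 := max_le (by linarith) zero_le_one
  have hvol : ∀ r : ℝ, 0 ≤ r → volume (ball (0 : ℂ) r) = ENNReal.ofReal (r ^ 2 * π) :=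
    fun r hr => by
    rw [Complex.volume_ball, ENNReal.ofReal_mul (by positivity), ENNReal.ofReal_pow hr,
      ← NNReal.coe_real_pi, ENNReal.ofReal_coe_nnreal]
  calc volume {z ∈ ball (0 : ℂ) 1 | 1 - ‖z‖ < δ}
      ≤ volume (ball (0 : ℂ) 1 \ ball 0 t) := by
        refine measure_mono fun z hz => ⟨hz.1, fun hzt => (mem_ball_zero_iff.1 hzt).not_ge ?_⟩
        exact max_le (by linarith [hz.2]) (norm_nonneg z)
    _ = ENNReal.ofReal (π - t ^ 2 * π) := by
        rw [measure_sdiff (ball_subset_ball ht1) measurableSet_ball.nullMeasurableSet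
          measure_ball_lt_top.ne, hvol 1 zero_le_one, hvol t ht0, one_pow, one_mul,
          ENNReal.ofReal_sub _ (by positivity)]
    _ ≤ ENNReal.ofReal (2 * π * δ) := by
        refine ENNReal.ofReal_le_ofReal ?_
        have ht : 1 - t ^ 2 ≤ 2 * δ := by nlinarith [le_max_left (1 - δ) 0]
        nlinarith [pi_pos]

lemma volume_lt_norm_deriv_le {f : ℂ → ℂ} {M : ℝ} (hM : 0 ≤ M)
    (hf : ∀ z ∈ ball (0 : ℂ) 1, ‖deriv f z‖ ≤ M) {t : ℝ} (ht : 0 < t) :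
    volume {z ∈ ball (0 : ℂ) 1 | t * (1 - ‖z‖) < ‖deriv f z‖} ≤
      ENNReal.ofReal (2 * π * M / t) := by
  have hsub : {z ∈ ball (0 : ℂ) 1 | t * (1 - ‖z‖) < ‖deriv f z‖} ⊆
      {z ∈ ball (0 : ℂ) 1 | 1 - ‖z‖ < M / t} := fun z hz =>
    ⟨hz.1, (lt_div_iff₀' ht).2 (hz.2.trans_le (hf z hz.1))⟩
  rw [mul_div_assoc]
  exact (measure_mono hsub).trans (volume_ball_inter_one_sub_norm_lt_le (by positivity))

/-! ### The Poisson integral of `‖f‖ ^ 2` and the backward shift -/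

section BackwardShift

lemma continuousOn_poissonKernel_sphere {c w : ℂ} {R : ℝ} (hw : w ∈ ball c R) :
    ContinuousOn (poissonKernel c w) (sphere c |R|) := by
  rw [poissonKernel_eq_re_herglotzRieszKernel]
  exact Complex.continuous_re.comp_continuousOn (continuousOn_herglotzRieszKernel_sphere hw)

lemma circleAverage_poissonKernel {c w : ℂ} {R : ℝ} (hw : w ∈ ball c R) :
    circleAverage (poissonKernel c w) c R = 1 := by
  have h := (diffContOnCl_const (c := (1 : ℂ))).circleAverage_poissonKernel_smul (R := R) hw
  have hofReal := Complex.ofRealCLM.circleAverage_comp_comm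
    (continuousOn_poissonKernel_sphere hw).circleIntegrable'
  rw [← Complex.ofReal_inj, Complex.ofReal_one, ← h, ← Complex.ofRealCLM_apply, ← hofReal]
  congr 1
  ext z
  simp

lemma circleAverage_poissonKernel_mul_re {f : ℂ → ℂ} {c w : ℂ} {R : ℝ}
    (hf : DiffContOnCl ℂ f (ball c R)) (hf' : ContinuousOn f (sphere c |R|)) (hw : w ∈ ball c R) :
    circleAverage (fun z => poissonKernel c w z * (f z).re) c R = (f w).re := by
  rw [← hf.circleAverage_poissonKernel_smul hw, ← Complex.reCLM_apply,
    ← Complex.reCLM.circleAverage_comp_comm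
      ((continuousOn_poissonKernel_sphere hw).smul hf').circleIntegrable']
  congr 1
  ext z
  simp

lemma circleAverage_poissonKernel_mul_norm_sub_sq {f : ℂ → ℂ} {c w : ℂ} {R : ℝ}
    (hf : DiffContOnCl ℂ f (ball c R)) (hw : w ∈ ball c R) :
    circleAverage (fun z => poissonKernel c w z * ‖f z - f w‖ ^ 2) c R =
      circleAverage (fun z => poissonKernel c w z * ‖f z‖ ^ 2) c R - ‖f w‖ ^ 2 := by
  have hR : 0 < R := pos_of_mem_ball hw
  have hfs : ContinuousOn f (sphere c |R|) := by
    rw [abs_of_pos hR]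
    exact hf.continuousOn_ball.mono sphere_subset_closedBall
  have hP := continuousOn_poissonKernel_sphere hw
  have hcross : circleAverage (fun z => poissonKernel c w z * (conj (f w) * f z).re) c R =
      ‖f w‖ ^ 2 := by
    rw [circleAverage_poissonKernel_mul_re (f := fun z => conj (f w) * f z)
      (hf.const_smul (conj (f w))) (hfs.const_smul (conj (f w))) hw, Complex.conj_mul',
      ← Complex.ofReal_pow, Complex.ofReal_re]
  have hexpand : ∀ z, poissonKernel c w z * ‖f z - f w‖ ^ 2 =
      poissonKernel c w z * ‖f z‖ ^ 2 + ‖f w‖ ^ 2 • poissonKernel c w z -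
        (2 : ℝ) • (poissonKernel c w z * (conj (f w) * f z).re) := fun z => by
    rw [← Complex.normSq_eq_norm_sq, ← Complex.normSq_eq_norm_sq, ← Complex.normSq_eq_norm_sq,
      Complex.normSq_sub, mul_comm (conj (f w)), smul_eq_mul, smul_eq_mul]
    ring
  have hi₁ : CircleIntegrable (fun z => poissonKernel c w z * ‖f z‖ ^ 2) c R :=
    (hP.mul (hfs.norm.pow 2)).circleIntegrable'
  have hi₂ : CircleIntegrable (fun z => ‖f w‖ ^ 2 • poissonKernel c w z) c R :=
    (hP.const_smul (‖f w‖ ^ 2)).circleIntegrable'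
  have hi₃ : CircleIntegrable (fun z => (2 : ℝ) • (poissonKernel c w z * (conj (f w) * f z).re))
      c R := ((hP.mul (Complex.continuous_re.comp_continuousOn
        (hfs.const_smul (conj (f w))))).const_smul (2 : ℝ)).circleIntegrable'
  simp only [hexpand]
  refine (circleAverage_fun_sub (hi₁.add hi₂) hi₃).trans ?_
  rw [circleAverage_add hi₁ hi₂,
    circleAverage_fun_smul, circleAverage_fun_smul, hcross, circleAverage_poissonKernel hw,
    smul_eq_mul, smul_eq_mul]
  ring

/-- The value at `a` of the `i`-th iterate of the backward shift, applied to the power series with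
coefficients `b`. -/
def backwardShift (b : ℕ → ℂ) (i : ℕ) (a : ℂ) : ℂ := ∑' k, b (i + k) * a ^ k

variable {b : ℕ → ℂ} {a : ℂ}

lemma summable_norm_mul_pow_of_bddAbove (hb : BddAbove (range fun n => ‖b n‖)) (ha : ‖a‖ < 1)
    (i : ℕ) : Summable fun k => ‖b (i + k) * a ^ k‖ := by
  obtain ⟨M, hM⟩ := hb
  refine Summable.of_nonneg_of_le (fun k => norm_nonneg _) (fun k => ?_)
    ((summable_geometric_of_lt_one (norm_nonneg a) ha).mul_left M)
  rw [norm_mul, norm_pow]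
  gcongr
  exact hM ⟨i + k, rfl⟩

lemma backwardShift_eq_add (hb : BddAbove (range fun n => ‖b n‖)) (ha : ‖a‖ < 1) (i : ℕ) :
    backwardShift b i a = b i + a * backwardShift b (i + 1) a := by
  rw [backwardShift, (summable_norm_mul_pow_of_bddAbove hb ha i).of_norm.tsum_eq_zero_add,
    pow_zero, mul_one, add_zero, backwardShift, ← tsum_mul_left]
  congr 1
  refine tsum_congr fun k => ?_
  rw [add_right_comm, add_assoc]
  ring

lemma summable_norm_backwardShift (hb : Summable fun n => ‖b n‖) (ha : ‖a‖ < 1) :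
    Summable fun i => ‖backwardShift b i a‖ := by
  have hdouble : Summable fun p : ℕ × ℕ => ‖b (p.1 + p.2) * a ^ p.2‖ := by
    have hinj : Function.Injective fun p : ℕ × ℕ => (p.1 + p.2, p.2) := fun p q h => by
      simp only [Prod.mk.injEq] at h
      exact Prod.ext (by omega) h.2
    refine ((hb.mul_of_nonneg (summable_geometric_of_lt_one (norm_nonneg a) ha)
      (fun n => norm_nonneg _) fun n => by positivity).comp_injective hinj).congr fun p => ?_
    rw [Function.comp_apply, norm_mul, norm_pow]
  exact Summable.of_nonneg_of_le (fun i => norm_nonneg _)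
    (fun i => norm_tsum_le_tsum_norm (hdouble.prod_factor i)) hdouble.prod

lemma hasSum_backwardShift_succ_mul_pow {f : ℂ → ℂ} (hb : Summable fun n => ‖b n‖)
    (hf : ∀ z ∈ closedBall (0 : ℂ) 1, HasSum (fun n => b n * z ^ n) (f z)) (ha : ‖a‖ < 1) {z : ℂ}
    (hz : ‖z‖ ≤ 1) (hza : z ≠ a) :
    HasSum (fun i => backwardShift b (i + 1) a * z ^ i) ((f z - f a) / (z - a)) := by
  have hsum : Summable fun i => backwardShift b i a * z ^ i :=
    Summable.of_norm_bounded (summable_norm_backwardShift hb ha) fun i => by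
      rw [norm_mul, norm_pow]
      exact mul_le_of_le_one_right (norm_nonneg _) (pow_le_one₀ (norm_nonneg z) hz)
  have hsucc : Summable fun i => backwardShift b (i + 1) a * z ^ i :=
    Summable.of_norm_bounded ((summable_nat_add_iff 1).2 (summable_norm_backwardShift hb ha))
      fun i => by
        rw [norm_mul, norm_pow]
        exact mul_le_of_le_one_right (norm_nonneg _) (pow_le_one₀ (norm_nonneg z) hz)
  have hbdd : BddAbove (range fun n => ‖b n‖) := hb.tendsto_atTop_zero.bddAbove_range
  have hzero : backwardShift b 0 a = f a := by
    simpa only [backwardShift, zero_add] using (hf a (mem_closedBall_zero_iff.2 ha.le)).tsum_eq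
  have hshift : ∑' i, backwardShift b i a * z ^ i =
      f a + z * ∑' i, backwardShift b (i + 1) a * z ^ i := by
    rw [hsum.tsum_eq_zero_add, hzero, pow_zero, mul_one, ← tsum_mul_left]
    congr 1
    exact tsum_congr fun i => by ring
  have hrec : ∑' i, backwardShift b i a * z ^ i =
      f z + a * ∑' i, backwardShift b (i + 1) a * z ^ i := by
    have hfz := hf z (mem_closedBall_zero_iff.2 hz)
    rw [← hfz.tsum_eq, ← tsum_mul_left, ← hfz.summable.tsum_add (hsucc.mul_left a)]
    exact tsum_congr fun i => by rw [backwardShift_eq_add hbdd ha]; ring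
  have hquot : ∑' i, backwardShift b (i + 1) a * z ^ i = (f z - f a) / (z - a) := by
    rw [eq_div_iff (sub_ne_zero.2 hza)]
    linear_combination hshift.symm.trans hrec
  exact hquot ▸ hsucc.hasSum

/- Parseval, after `poissonKernel 0 a z * ‖z - a‖ ^ 2 = 1 - ‖a‖ ^ 2` has removed the denominator of
the difference quotient of `f` at `a`. -/
lemma hasSum_norm_sq_backwardShift_succ {f : ℂ → ℂ} (hb : Summable fun n => ‖b n‖)
    (hf : ∀ z ∈ closedBall (0 : ℂ) 1, HasSum (fun n => b n * z ^ n) (f z))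
    (hfd : DiffContOnCl ℂ f (ball 0 1)) (ha : ‖a‖ < 1) :
    HasSum (fun i => (1 - ‖a‖ ^ 2) * ‖backwardShift b (i + 1) a‖ ^ 2)
      (circleAverage (fun z => poissonKernel 0 a z * ‖f z‖ ^ 2) 0 1 - ‖f a‖ ^ 2) := by
  have hne : ∀ z ∈ sphere (0 : ℂ) |1|, z ≠ a := by
    rintro z hz rfl
    rw [mem_sphere_zero_iff_norm, abs_one] at hz
    exact ha.ne hz
  have hparseval : HasSum (fun i => ‖backwardShift b (i + 1) a‖ ^ 2)
      (circleAverage (fun z => ‖(f z - f a) / (z - a)‖ ^ 2) 0 1) := by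
    refine (hasSum_circleAverage_norm_sq ?_ fun z hz =>
      hasSum_backwardShift_succ_mul_pow hb hf ha ?_ (hne z hz)).congr_fun fun i => ?_
    · simpa only [abs_one, one_pow, mul_one] using
        (summable_nat_add_iff 1).2 (summable_norm_backwardShift hb ha)
    · exact (mem_sphere_zero_iff_norm.1 hz).trans_le abs_one.le
    · rw [one_pow, mul_one]
  rw [← circleAverage_poissonKernel_mul_norm_sub_sq hfd (mem_ball_zero_iff.2 ha)]
  have hkernel : circleAverage (fun z => poissonKernel 0 a z * ‖f z - f a‖ ^ 2) 0 1 =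
      (1 - ‖a‖ ^ 2) * circleAverage (fun z => ‖(f z - f a) / (z - a)‖ ^ 2) 0 1 := by
    rw [← smul_eq_mul, ← circleAverage_fun_smul]
    refine circleAverage_congr_sphere fun z hz => ?_
    rw [poissonKernel_def, sub_zero, sub_zero, mem_sphere_zero_iff_norm.1 hz, abs_one, one_pow,
      norm_div, div_pow, smul_eq_mul, div_mul_eq_mul_div, mul_div_assoc]
  exact hkernel ▸ hparseval.mul_left _

lemma norm_tsum_mul_sq_le {ι A : Type*} [NormedRing A] {x y : ι → A}
    (hx : Summable fun i => ‖x i‖ ^ 2)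
    (hy : Summable fun i => ‖y i‖ ^ 2) :
    ‖∑' i, x i * y i‖ ^ 2 ≤ (∑' i, ‖x i‖ ^ 2) * ∑' i, ‖y i‖ ^ 2 := by
  have hx0 : 0 ≤ ∑' i, ‖x i‖ ^ 2 := tsum_nonneg fun i => sq_nonneg _
  have hy0 : 0 ≤ ∑' i, ‖y i‖ ^ 2 := tsum_nonneg fun i => sq_nonneg _
  obtain ⟨S, -, hS, hsum⟩ := inner_le_Lp_mul_Lq_hasSum_of_nonneg HolderConjugate.two_two
    (f := fun i => ‖x i‖) (g := fun i => ‖y i‖) (A := √(∑' i, ‖x i‖ ^ 2))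
    (B := √(∑' i, ‖y i‖ ^ 2)) (sqrt_nonneg _) (sqrt_nonneg _)
    (fun i => norm_nonneg _) (fun i => norm_nonneg _)
    (by simpa only [rpow_two, sq_sqrt hx0] using hx.hasSum)
    (by simpa only [rpow_two, sq_sqrt hy0] using hy.hasSum)
  have hnorm : ‖∑' i, x i * y i‖ ≤ S :=
    tsum_of_norm_bounded hsum fun i => norm_mul_le (x i) (y i)
  rw [← sq_sqrt hx0, ← sq_sqrt hy0, ← mul_pow]
  exact pow_le_pow_left₀ (norm_nonneg _) (hnorm.trans hS) 2

lemma one_sub_norm_sq_mul_norm_sq_backwardShift_le (hb : Summable fun n => ‖b n‖ ^ 2)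
    (ha : ‖a‖ < 1) (i : ℕ) :
    (1 - ‖a‖ ^ 2) * ‖backwardShift b i a‖ ^ 2 ≤ ∑' k, ‖b (i + k)‖ ^ 2 := by
  have hx : ‖a‖ ^ 2 < 1 := pow_lt_one₀ (norm_nonneg a) ha two_ne_zero
  have hgeom : HasSum (fun k => ‖a ^ k‖ ^ 2) (1 - ‖a‖ ^ 2)⁻¹ := by
    simpa only [norm_pow, ← pow_mul, mul_comm 2] using hasSum_geometric_of_lt_one (sq_nonneg ‖a‖) hx
  have hcauchy := norm_tsum_mul_sq_le (hb.comp_injective (add_right_injective i)) hgeom.summable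
  rw [hgeom.tsum_eq, ← div_eq_mul_inv, le_div_iff₀' (sub_pos.2 hx)] at hcauchy
  exact hcauchy

lemma summable_tsum_add_succ {c : ℕ → ℝ} (hc0 : ∀ n, 0 ≤ c n)
    (hc : Summable fun n => n * c n) : Summable fun i => ∑' k, c (i + 1 + k) := by
  have hsigma : Summable fun p : Σ n : ℕ, antidiagonal n => c (p.1 + 1) := by
    refine (summable_sigma_of_nonneg fun p => hc0 _).2 ⟨fun n => .of_finite, ?_⟩
    refine ((summable_nat_add_iff 1).2 hc).congr fun n => ?_
    simp [tsum_fintype]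
  have hprod : Summable fun p : ℕ × ℕ => c (p.1 + 1 + p.2) := by
    refine HasAntidiagonal.sigmaAntidiagonalEquivProd.summable_iff.1 (hsigma.congr fun p => ?_)
    rw [Function.comp_apply, HasAntidiagonal.sigmaAntidiagonalEquivProd_apply, add_right_comm,
      mem_antidiagonal.1 p.2.2]
  exact hprod.prod

lemma summable_of_summable_nat_mul {c : ℕ → ℝ} (hc0 : ∀ n, 0 ≤ c n)
    (hc : Summable fun n => n * c n) : Summable c := by
  refine (summable_nat_add_iff 1).1 (Summable.of_nonneg_of_le (fun n => hc0 _) (fun n => ?_)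
    ((summable_nat_add_iff 1).2 hc))
  refine le_mul_of_one_le_left (hc0 _) ?_
  rw [Nat.cast_add_one]
  exact le_add_of_nonneg_left n.cast_nonneg

lemma bddAbove_range_norm_of_summable_sq {E : Type*} [SeminormedAddCommGroup E] {b : ℕ → E}
    (hb : Summable fun n => ‖b n‖ ^ 2) : BddAbove (range fun n => ‖b n‖) := by
  have hsqrt := hb.tendsto_atTop_zero.sqrt
  simp only [sqrt_sq (norm_nonneg _)] at hsqrt
  exact hsqrt.bddAbove_range

lemma tendsto_backwardShift_mul_pow (hb : BddAbove (range fun n => ‖b n‖)) (ha : ‖a‖ < 1) (i : ℕ) :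
    Tendsto (fun r : ℝ => backwardShift (fun n => b n * r ^ n) i a) (𝓝[<] 1)
      (𝓝 (backwardShift b i a)) := by
  refine tendsto_tsum_of_dominated_convergence (summable_norm_mul_pow_of_bddAbove hb ha i)
    (fun k => ?_) ?_
  · refine tendsto_nhdsWithin_of_tendsto_nhds (Continuous.tendsto' (by fun_prop) _ _ ?_)
    simp only [Complex.ofReal_one, one_pow, mul_one]
  · filter_upwards [Ioo_mem_nhdsLT one_pos] with r hr k
    rw [mul_right_comm, norm_mul _ ((r : ℂ) ^ (i + k)), norm_pow, Complex.norm_of_nonneg hr.1.le]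
    exact mul_le_of_le_one_right (norm_nonneg _) (pow_le_one₀ hr.1.le hr.2.le)

/- The bound on the terms coming from `n * ‖b n‖ ^ 2` is uniform in `r`. -/
lemma tendsto_tsum_norm_sq_backwardShift_mul_pow (hb : Summable fun n => n * ‖b n‖ ^ 2)
    (ha : ‖a‖ < 1) :
    Tendsto (fun r : ℝ =>
        ∑' i, (1 - ‖a‖ ^ 2) * ‖backwardShift (fun n => b n * r ^ n) (i + 1) a‖ ^ 2) (𝓝[<] 1)
      (𝓝 (∑' i, (1 - ‖a‖ ^ 2) * ‖backwardShift b (i + 1) a‖ ^ 2)) := by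
  have hb2 := summable_of_summable_nat_mul (fun n => sq_nonneg _) hb
  have hlim := tendsto_backwardShift_mul_pow (bddAbove_range_norm_of_summable_sq hb2) ha
  refine tendsto_tsum_of_dominated_convergence (summable_tsum_add_succ (fun n => sq_nonneg _) hb)
    (fun i => ((hlim (i + 1)).norm.pow 2).const_mul _) ?_
  filter_upwards [Ioo_mem_nhdsLT one_pos] with r hr i
  have hle : ∀ n, ‖b n * r ^ n‖ ^ 2 ≤ ‖b n‖ ^ 2 := fun n => by
    rw [norm_mul, norm_pow, Complex.norm_of_nonneg hr.1.le]
    exact pow_le_pow_left₀ (by positivity [hr.1.le])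
      (mul_le_of_le_one_right (norm_nonneg _) (pow_le_one₀ hr.1.le hr.2.le)) 2
  have hbr : Summable fun n => ‖b n * r ^ n‖ ^ 2 := hb2.of_nonneg_of_le (fun n => sq_nonneg _) hle
  have hinj := add_right_injective (i + 1)
  rw [norm_of_nonneg (mul_nonneg (sub_nonneg.2 (pow_le_one₀ (norm_nonneg a) ha.le)) (sq_nonneg _))]
  exact (one_sub_norm_sq_mul_norm_sq_backwardShift_le hbr ha _).trans
    ((hbr.comp_injective hinj).tsum_mono (hb2.comp_injective hinj) fun k => hle _)

end BackwardShift

/-! ### Inner functions in the Dirichlet space -/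

section Inner

variable {f B : ℂ → ℂ} {a : ℂ}

lemma hasSum_norm_sq_backwardShift_succ_dilation {r : ℝ}
    (hf : DifferentiableOn ℂ f (ball 0 1)) (hr0 : 0 ≤ r) (hr1 : r < 1) (ha : ‖a‖ < 1) :
    HasSum (fun i =>
        (1 - ‖a‖ ^ 2) * ‖backwardShift (fun n => taylorCoeff f n * r ^ n) (i + 1) a‖ ^ 2)
      (circleAverage (fun z => poissonKernel 0 a z * ‖f (r * z)‖ ^ 2) 0 1 - ‖f (r * a)‖ ^ 2) := by
  have hball : ∀ z ∈ closedBall (0 : ℂ) 1, r * z ∈ ball (0 : ℂ) 1 := fun z hz => by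
    rw [mem_ball_zero_iff, norm_mul, Complex.norm_of_nonneg hr0]
    exact mul_lt_one_of_nonneg_of_lt_one_left hr0 hr1 (mem_closedBall_zero_iff.1 hz)
  refine hasSum_norm_sq_backwardShift_succ (f := fun z => f (r * z)) ?_ (fun z hz => ?_) ?_ ha
  · have hmem := hball 1 (mem_closedBall_zero_iff.2 norm_one.le)
    rw [mul_one] at hmem
    exact (hasSum_taylorCoeff hf hmem).summable.norm
  · simpa only [mul_pow, mul_assoc] using hasSum_taylorCoeff hf (hball z hz)
  · refine DifferentiableOn.diffContOnCl ?_
    rw [closure_ball _ one_ne_zero]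
    exact hf.comp (by fun_prop) hball

lemma IsInner.tendsto_circleAverage_poissonKernel (hB : IsInner B) (ha : ‖a‖ < 1) :
    Tendsto (fun r : ℝ => circleAverage (fun z => poissonKernel 0 a z * ‖B (r * z)‖ ^ 2) 0 1)
      (𝓝[<] 1) (𝓝 1) := by
  have ha' : a ∈ ball (0 : ℂ) 1 := mem_ball_zero_iff.2 ha
  have hP : Continuous fun θ => poissonKernel 0 a (circleMap 0 1 θ) :=
    (continuousOn_poissonKernel_sphere ha').comp_continuous (continuous_circleMap 0 1)
      (circleMap_mem_sphere' 0 1)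
  have hball : ∀ᶠ r : ℝ in 𝓝[<] 1, ∀ θ : ℝ, r * circleMap 0 1 θ ∈ ball (0 : ℂ) 1 := by
    filter_upwards [Ioo_mem_nhdsLT one_pos] with r hr θ
    rw [mem_ball_zero_iff, norm_mul, Complex.norm_of_nonneg hr.1.le, norm_circleMap_zero, abs_one,
      mul_one]
    exact hr.2
  rw [← congrArg 𝓝 (circleAverage_poissonKernel ha')]
  refine (intervalIntegral.tendsto_integral_filter_of_dominated_convergence
    (fun θ => |poissonKernel 0 a (circleMap 0 1 θ)|) ?_ ?_
    (hP.abs.intervalIntegrable _ _) ?_).const_smul (2 * π)⁻¹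
  · filter_upwards [hball] with r hr
    have hBr : Continuous fun θ => B (r * circleMap 0 1 θ) :=
      hB.1.continuousOn.comp_continuous (by fun_prop) hr
    exact (hP.mul (hBr.norm.pow 2)).aestronglyMeasurable
  · filter_upwards [hball] with r hr
    refine .of_forall fun θ _ => ?_
    rw [norm_mul, norm_eq_abs, norm_pow, norm_norm]
    exact mul_le_of_le_one_right (abs_nonneg _) (pow_le_one₀ (norm_nonneg _) (hB.2.1 _ (hr θ)))
  · have hrad := hB.2.2
    rw [restrict_Ico_eq_restrict_Ioc, ae_restrict_iff' measurableSet_Ioc] at hrad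
    rw [uIoc_of_le two_pi_pos.le]
    filter_upwards [hrad] with θ hθ hθ'
    simpa only [circleMap_zero, Complex.ofReal_one, one_mul, one_pow, mul_one] using
      ((hθ hθ').pow 2).const_mul (poissonKernel 0 a (circleMap 0 1 θ))

lemma IsInner.tsum_eq_one_sub_norm_sq (hB : IsInner B)
    (hb : Summable fun n => n * ‖taylorCoeff B n‖ ^ 2) (ha : ‖a‖ < 1) :
    ∑' i, (1 - ‖a‖ ^ 2) * ‖backwardShift (taylorCoeff B) (i + 1) a‖ ^ 2 = 1 - ‖B a‖ ^ 2 := by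
  have hBr : Tendsto (fun r : ℝ => B (r * a)) (𝓝[<] 1) (𝓝 (B a)) := by
    have hmul : Tendsto (fun r : ℝ => r * a) (𝓝[<] 1) (𝓝 a) :=
      tendsto_nhdsWithin_of_tendsto_nhds (Continuous.tendsto' (by fun_prop) _ _ (by simp))
    exact (hB.1.continuousOn.continuousAt (isOpen_ball.mem_nhds
      (mem_ball_zero_iff.2 ha))).tendsto.comp hmul
  refine tendsto_nhds_unique_of_eventuallyEq (tendsto_tsum_norm_sq_backwardShift_mul_pow hb ha)
    ((hB.tendsto_circleAverage_poissonKernel ha).sub (hBr.norm.pow 2)) ?_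
  filter_upwards [Ioo_mem_nhdsLT one_pos] with r hr
  exact (hasSum_norm_sq_backwardShift_succ_dilation hB.1 hr.1.le hr.2 ha).tsum_eq

lemma isBigO_backwardShift_taylorCoeff (hf : DifferentiableOn ℂ f (ball 0 1))
    (hfb : BddAbove (range fun n => ‖taylorCoeff f n‖))
    (hf1 : f =O[discBoundary] fun _ => (1 : ℝ)) (i : ℕ) :
    backwardShift (taylorCoeff f) i =O[discBoundary] fun _ => (1 : ℝ) := by
  induction i with
  | zero =>
    refine hf1.congr' ?_ .rfl
    filter_upwards [eventually_mem_ball_discBoundary] with z hz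
    simpa only [backwardShift, zero_add] using (hasSum_taylorCoeff hf hz).tsum_eq.symm
  | succ i ih =>
    have hinv : (fun z : ℂ => z⁻¹) =O[discBoundary] fun _ => (1 : ℝ) := by
      refine Asymptotics.IsBigO.of_norm_left ?_
      simpa only [norm_inv] using (tendsto_norm_discBoundary.inv₀ one_ne_zero).isBigO_one ℝ
    have hmul := hinv.mul (ih.sub (Asymptotics.isBigO_const_const (taylorCoeff f i) one_ne_zero _))
    simp only [mul_one] at hmul
    refine hmul.congr' ?_ .rfl
    filter_upwards [eventually_mem_ball_discBoundary,
      tendsto_norm_discBoundary.eventually_ne one_ne_zero] with z hz hz0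
    rw [backwardShift_eq_add hfb (mem_ball_zero_iff.1 hz) i, add_sub_cancel_left,
      inv_mul_cancel_left₀ (norm_ne_zero_iff.1 hz0)]

lemma tendsto_one_sub_norm_sq_mul_norm_sq_discBoundary {E : Type*} [SeminormedAddCommGroup E]
    {f : ℂ → E} (hf1 : f =O[discBoundary] fun _ => (1 : ℝ)) :
    Tendsto (fun z => (1 - ‖z‖ ^ 2) * ‖f z‖ ^ 2) discBoundary (𝓝 0) := by
  have hzero : Tendsto (fun z : ℂ => 1 - ‖z‖ ^ 2) discBoundary (𝓝 0) := by
    simpa using (tendsto_norm_discBoundary.pow 2).const_sub 1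
  have hmul := ((Asymptotics.isLittleO_one_iff ℝ).2 hzero).mul_isBigO (hf1.norm_left.pow 2)
  simpa [Asymptotics.isLittleO_one_iff] using hmul

lemma IsInner.tendsto_norm_discBoundary (hB : IsInner B)
    (hb : Summable fun n => n * ‖taylorCoeff B n‖ ^ 2) :
    Tendsto (fun z => ‖B z‖) discBoundary (𝓝 1) := by
  have hb2 := summable_of_summable_nat_mul (fun n => sq_nonneg _) hb
  have hB1 : B =O[discBoundary] fun _ => (1 : ℝ) := by
    refine .of_bound 1 ?_
    filter_upwards [eventually_mem_ball_discBoundary] with z hz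
    simpa only [norm_one, mul_one] using hB.2.1 z hz
  have hterm : ∀ i, Tendsto (fun z => (1 - ‖z‖ ^ 2) * ‖backwardShift (taylorCoeff B) (i + 1) z‖ ^ 2)
      discBoundary (𝓝 0) := fun i => tendsto_one_sub_norm_sq_mul_norm_sq_discBoundary
    (isBigO_backwardShift_taylorCoeff hB.1 (bddAbove_range_norm_of_summable_sq hb2) hB1 _)
  have htsum : Tendsto (fun z => ∑' i, (1 - ‖z‖ ^ 2) *
      ‖backwardShift (taylorCoeff B) (i + 1) z‖ ^ 2) discBoundary (𝓝 (∑' _ : ℕ, 0)) := by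
    refine tendsto_tsum_of_dominated_convergence
      (summable_tsum_add_succ (fun n => sq_nonneg _) hb) hterm ?_
    filter_upwards [eventually_mem_ball_discBoundary] with z hz i
    rw [mem_ball_zero_iff] at hz
    rw [norm_of_nonneg (mul_nonneg (sub_nonneg.2 (pow_le_one₀ (norm_nonneg z) hz.le))
      (sq_nonneg _))]
    exact one_sub_norm_sq_mul_norm_sq_backwardShift_le hb2 hz _
  rw [tsum_zero] at htsum
  have hdefect : Tendsto (fun z => 1 - ‖B z‖ ^ 2) discBoundary (𝓝 0) := htsum.congr' <| by
    filter_upwards [eventually_mem_ball_discBoundary] with z hz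
    exact hB.tsum_eq_one_sub_norm_sq hb (mem_ball_zero_iff.1 hz)
  simpa [sqrt_sq (norm_nonneg _)] using (hdefect.const_sub 1).sqrt

end Inner

theorem inner_deriv_weak_L1_tilde_iff_finite_blaschke (B : ℂ → ℂ) (hB : IsInner B) :
    (∃ C > (0:ℝ), ∀ lam > (0:ℝ),
      volume {z ∈ Metric.ball (0:ℂ) 1 | lam * (1 - ‖z‖) < ‖deriv B z‖}
        ≤ ENNReal.ofReal (C / lam)) ↔
    IsFiniteBlaschkeProduct B := by
  constructor
  · rintro ⟨C, hC, hweak⟩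
    have hdirichlet := summable_nat_mul_norm_sq_taylorCoeff hB.1 hB.2.1 hC.le hweak
    exact .of_tendsto_discBoundary hB.1 (hB.tendsto_norm_discBoundary hdirichlet)
  · intro hblaschke
    obtain ⟨M, hM, hderiv⟩ := hblaschke.exists_norm_deriv_le
    exact ⟨2 * π * M, by positivity, fun t ht => volume_lt_norm_deriv_le hM.le hderiv ht⟩
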